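/- Let G be a group, S ⊆ G a symmetric, conjugation-closed generating set not containing the identity, and ‖·‖_S the associated word norm. Let Φ: G → ℝ be a relative quasimorphism with respect to ‖·‖_S with constant C > 0. Assume that for every g ∈ G the limit Φ̄(g) = lim_{n→∞} Φ(gⁿ)/n exists and that Φ̄(s) = 0 for every s ∈ S. Then for every f ∈ G the stable word norm lim_{k→∞} ‖f^k‖_S/k exists and is at least |Φ̄(f)|/(3C). In particular, if Φ̄(f) ≠ 0 for some f ∈ G, then the word norm ‖·‖_S is stably unbounded. -/

import Mathlib

/-- The word norm associated with a generating set `S`: the least `n` such that `g`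
is a product of `n` elements of `S` (so the identity has word norm `0`). -/
noncomputable def wordNorm {G : Type*} [Group G] (S : Set G) (g : G) : ℕ :=
  sInf {n : ℕ | ∃ l : List G, l.length = n ∧ (∀ x ∈ l, x ∈ S) ∧ l.prod = g}

theorem wn_exists {G : Type*} [Group G] (S : Set G) (hgen : Subgroup.closure S = ⊤)
    (hsymm : ∀ s ∈ S, s⁻¹ ∈ S) (g : G) :
    ∃ l : List G, l.length = wordNorm S g ∧ (∀ x ∈ l, x ∈ S) ∧ l.prod = g := by
  have hg : g ∈ Subgroup.closure S := by rw [hgen]; trivial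
  rw [← Subgroup.mem_toSubmonoid, Subgroup.closure_toSubmonoid] at hg
  obtain ⟨l, hl, hp⟩ := Submonoid.exists_list_of_mem_closure hg
  have hne : {n : ℕ | ∃ l : List G, l.length = n ∧ (∀ x ∈ l, x ∈ S) ∧ l.prod = g}.Nonempty :=
    ⟨l.length, l, rfl, fun x hx => (hl x hx).elim id
      (fun h => by simpa using hsymm _ h), hp⟩
  exact Nat.sInf_mem hne

theorem wn_le {G : Type*} [Group G] (S : Set G) (l : List G) (hl : ∀ x ∈ l, x ∈ S) :
    wordNorm S l.prod ≤ l.length :=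
  Nat.sInf_le ⟨l, rfl, hl, rfl⟩

theorem wn_mul {G : Type*} [Group G] (S : Set G) (hgen : Subgroup.closure S = ⊤)
    (hsymm : ∀ s ∈ S, s⁻¹ ∈ S) (g h : G) :
    wordNorm S (g * h) ≤ wordNorm S g + wordNorm S h := by
  obtain ⟨l, h1, h2, h3⟩ := wn_exists S hgen hsymm g
  obtain ⟨m, k1, k2, k3⟩ := wn_exists S hgen hsymm h
  have := wn_le S (l ++ m) (fun x hx => (List.mem_append.1 hx).elim (h2 x) (k2 x))
  simpa [h1, h3, k1, k3] using this

/-- Let `S` be a symmetric, conjugation-closed generating set of `G`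
not containing the identity, and let `Φ` be a relative quasimorphism with respect to
the word norm `‖·‖_S` with constant `C > 0` such that for every `g` the limit
`Φ̄(g) = lim Φ(gⁿ)/n` exists and `Φ̄` vanishes on `S`. Then for every `f` the stable
word norm `lim_{k→∞} ‖f^k‖_S/k` exists and is at least `|Φ̄(f)|/(3C)`; in particular,
if `Φ̄(f) ≠ 0` for some `f`, then the word norm is stably unbounded. -/
theorem stable_word_norm_bounded_below_and_stably_unbounded
    {G : Type*} [Group G] (S : Set G)
    (hgen : Subgroup.closure S = ⊤)
    (hone : (1 : G) ∉ S)
    (hsymm : ∀ s ∈ S, s⁻¹ ∈ S)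
    (hconjS : ∀ s ∈ S, ∀ g : G, g * s * g⁻¹ ∈ S)
    (Φ : G → ℝ) (C : ℝ) (hC : 0 < C)
    (hrel : ∀ g h : G, |Φ (g * h) - Φ g - Φ h| ≤
      C * min (wordNorm S g : ℝ) (wordNorm S h : ℝ))
    (Φbar : G → ℝ)
    (hlim : ∀ g : G,
      Filter.Tendsto (fun n : ℕ => Φ (g ^ n) / n) Filter.atTop (nhds (Φbar g)))
    (hvanish : ∀ s ∈ S, Φbar s = 0) :
    (∀ f : G, ∃ L : ℝ,
      Filter.Tendsto (fun k : ℕ => (wordNorm S (f ^ k) : ℝ) / k) Filter.atTop (nhds L) ∧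
      |Φbar f| / (3 * C) ≤ L) ∧
    ((∃ f : G, Φbar f ≠ 0) → ∃ (f : G) (L : ℝ),
      Filter.Tendsto (fun k : ℕ => (wordNorm S (f ^ k) : ℝ) / k) Filter.atTop (nhds L) ∧
      0 < L) := by
  have hwS : ∀ s ∈ S, (wordNorm S s : ℝ) ≤ 1 := by
    intro s hs
    have := wn_le S [s] (by simpa using hs)
    simp only [List.prod_singleton, List.length_singleton] at this
    exact_mod_cast this
  have hw1 : (wordNorm S (1 : G) : ℝ) = 0 := by
    have := wn_le S ([] : List G) (by simp)
    simpa using this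
  have hΦ1 : Φ 1 = 0 := by
    have := hrel 1 1
    simp only [hw1, min_self, mul_zero, mul_one] at this
    have := abs_nonpos_iff.1 this
    linarith
  have hS : ∀ s ∈ S, ∀ h, |Φ (s * h) - Φ s - Φ h| ≤ C := by
    intro s hs h
    refine (hrel s h).trans ?_
    have : min (wordNorm S s : ℝ) (wordNorm S h : ℝ) ≤ 1 := (min_le_left _ _).trans (hwS s hs)
    nlinarith
  have hpow : ∀ s ∈ S, ∀ n : ℕ, |Φ (s ^ n) - n * Φ s| ≤ n * C := by
    intro s hs n
    induction n with
    | zero => simp [hΦ1]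
    | succ n ih =>
      have h1 := hS s hs (s ^ n)
      rw [pow_succ']
      rw [abs_le] at *
      push_cast
      constructor <;> linarith [h1.1, h1.2, ih.1, ih.2]
  have hΦS : ∀ s ∈ S, |Φ s| ≤ C := by
    intro s hs
    have ht : Filter.Tendsto (fun n : ℕ => |Φ (s ^ n) / n - Φ s|) Filter.atTop
        (nhds |Φbar s - Φ s|) := ((hlim s).sub_const _).abs
    have : |Φbar s - Φ s| ≤ C := by
      refine le_of_tendsto ht ?_
      filter_upwards [Filter.eventually_gt_atTop 0] with n hn
      have hn' : (0 : ℝ) < n := by exact_mod_cast hn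
      have e : Φ (s ^ n) / n - Φ s = (Φ (s ^ n) - n * Φ s) / n := by field_simp
      rw [e, abs_div, abs_of_pos hn', div_le_iff₀ hn', mul_comm C]
      exact hpow s hs n
    simpa [hvanish s hs] using this
  have hlist : ∀ l : List G, (∀ x ∈ l, x ∈ S) → |Φ l.prod| ≤ 2 * C * l.length := by
    intro l
    induction l with
    | nil => intro _; simp [hΦ1]
    | cons a l ih =>
      intro hl
      have ha : a ∈ S := hl a (by simp)
      have h0 := ih (fun x hx => hl x (by simp [hx]))
      have h1 := hS a ha l.prod
      have h2 := hΦS a ha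
      rw [List.prod_cons, List.length_cons]
      rw [abs_le] at *
      push_cast
      constructor <;> linarith [h0.1, h0.2, h1.1, h1.2, h2.1, h2.2]
  have hbound : ∀ g, |Φ g| ≤ 2 * C * wordNorm S g := by
    intro g
    obtain ⟨l, h1, h2, h3⟩ := wn_exists S hgen hsymm g
    have := hlist l h2
    rwa [h1, h3] at this
  have main : ∀ f : G, ∃ L : ℝ,
      Filter.Tendsto (fun k : ℕ => (wordNorm S (f ^ k) : ℝ) / k) Filter.atTop (nhds L) ∧
      |Φbar f| / (3 * C) ≤ L := by
    intro f
    have hsub : Subadditive (fun k : ℕ => (wordNorm S (f ^ k) : ℝ)) := by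
      intro m n
      simp only [pow_add]
      exact_mod_cast wn_mul S hgen hsymm _ _
    have ht := hsub.tendsto_lim ⟨0, by rintro _ ⟨n, rfl⟩; positivity⟩
    refine ⟨_, ht, ?_⟩
    have hle : |Φbar f| ≤ 2 * C * hsub.lim := by
      refine le_of_tendsto_of_tendsto' (hlim f).abs (ht.const_mul (2 * C)) ?_
      intro n
      rw [abs_div, Nat.abs_cast, ← mul_div_assoc]
      exact div_le_div_of_nonneg_right (hbound _) (Nat.cast_nonneg n)
    have hL : 0 ≤ hsub.lim := ge_of_tendsto' ht (fun n => by positivity)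
    rw [div_le_iff₀ (by positivity)]
    nlinarith [mul_nonneg hC.le hL]
  refine ⟨main, ?_⟩
  rintro ⟨f, hf⟩
  obtain ⟨L, h1, h2⟩ := main f
  exact ⟨f, L, h1, lt_of_lt_of_le (div_pos (abs_pos.2 hf) (by positivity)) h2⟩
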